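/- For every integer d ≥ 1, every natural number k, and every real m ∈ [0, 1], it holds that 0 ≤ 1 − g_d^{(k)}(m) ≤ (1 − m)^{(p_d)^k}, where the exponentiation is the real power with exponent (p_d)^k. -/

import Mathlib

noncomputable def g (d : ℕ) : ℝ → ℝ :=
  fun m => ∑ i ∈ Finset.range (d + 1),
    (1 / 4 ^ i : ℝ) * (Nat.choose (2 * i) i) * (m * (1 - m ^ 2) ^ i)

noncomputable def p (d : ℕ) : ℝ :=
  ∑ i ∈ Finset.range (d + 1), (1 / 4 ^ i : ℝ) * (Nat.choose (2 * i) i)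

lemma aux_p_closed (d : ℕ) :
    p d = (2 * d + 1) * ((1 / 4 ^ d : ℝ) * (Nat.choose (2 * d) d)) ∧
    p d = 2 * (d + 1) * ((1 / 4 ^ (d + 1) : ℝ) * (Nat.choose (2 * (d + 1)) (d + 1))) := by
  have hc : ∀ n : ℕ, (2 * n + 1) * ((1 / 4 ^ n : ℝ) * (Nat.choose (2 * n) n)) =
      2 * (n + 1) * ((1 / 4 ^ (n + 1) : ℝ) * (Nat.choose (2 * (n + 1)) (n + 1))) := by
    intro n
    have h := Nat.succ_mul_centralBinom_succ n
    simp only [Nat.centralBinom] at h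
    have h' : ((n : ℝ) + 1) * (Nat.choose (2 * (n + 1)) (n + 1)) =
        2 * (2 * n + 1) * (Nat.choose (2 * n) n) := by exact_mod_cast h
    have e : 2 * ((n : ℝ) + 1) * ((1 / 4 ^ (n + 1) : ℝ) * (Nat.choose (2 * (n + 1)) (n + 1)))
      = 2 * (1 / 4 ^ (n + 1) : ℝ) * (((n : ℝ) + 1) * (Nat.choose (2 * (n + 1)) (n + 1))) := by ring
    rw [e, h', pow_succ]
    field_simp
    ring
  have h1 : p d = (2 * d + 1) * ((1 / 4 ^ d : ℝ) * (Nat.choose (2 * d) d)) := by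
    induction d with
    | zero => simp [p]
    | succ n ih =>
      have : p (n + 1) = p n + (1 / 4 ^ (n + 1) : ℝ) * (Nat.choose (2 * (n + 1)) (n + 1)) := by
        simp only [p]; rw [Finset.sum_range_succ]
      rw [this, ih, hc n]
      push_cast
      ring
  exact ⟨h1, h1.trans (hc d)⟩

lemma aux_deriv (d : ℕ) (x : ℝ) : HasDerivAt (g d) (p d * (1 - x ^ 2) ^ d) x := by
  induction d with
  | zero =>
    have : g 0 = fun m => m := by funext m; simp [g]
    rw [this]
    simpa [p] using hasDerivAt_id' x
  | succ n ih =>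
    have hp : p (n + 1) = p n + (1 / 4 ^ (n + 1) : ℝ) * (Nat.choose (2 * (n + 1)) (n + 1)) := by
      simp only [p]; rw [Finset.sum_range_succ]
    have hg : g (n + 1) = fun m => g n m + (1 / 4 ^ (n + 1) : ℝ) *
        (Nat.choose (2 * (n + 1)) (n + 1)) * (m * (1 - m ^ 2) ^ (n + 1)) := by
      funext m; simp only [g]; rw [Finset.sum_range_succ]
    have h2 := (aux_p_closed n).2
    rw [hg, hp]
    set a := (1 / 4 ^ (n + 1) : ℝ) * (Nat.choose (2 * (n + 1)) (n + 1)) with ha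
    have h3 : HasDerivAt (fun m : ℝ => (1 - m ^ 2)) (-(2 * x)) x := by
      simpa using (hasDerivAt_pow 2 x).const_sub 1
    have h4 := ih.add (((hasDerivAt_id' x).mul (h3.pow (n + 1))).const_mul a)
    refine h4.congr_deriv ?_
    push_cast
    simp only [Nat.add_sub_cancel, Pi.pow_apply]
    rw [h2]
    ring

lemma aux_p_le (d : ℕ) : p d ≤ d + 1 := by
  have : p d ≤ ∑ i ∈ Finset.range (d + 1), (1 : ℝ) := by
    apply Finset.sum_le_sum
    intro i _
    have h : Nat.choose (2 * i) i ≤ 4 ^ i := by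
      calc Nat.choose (2 * i) i ≤ 2 ^ (2 * i) := Nat.choose_le_two_pow _ _
        _ = 4 ^ i := by rw [pow_mul]; norm_num
    have h' : (Nat.choose (2 * i) i : ℝ) ≤ 4 ^ i := by exact_mod_cast h
    rw [one_div, inv_mul_le_iff₀ (by positivity)]
    simpa using h'
  simpa using this

lemma aux_p_ge (d : ℕ) : 1 ≤ p d := by
  have := Finset.single_le_sum (s := Finset.range (d + 1))
    (f := fun i : ℕ => (1 / 4 ^ i : ℝ) * (Nat.choose (2 * i) i))
    (fun i _ => by positivity) (Finset.mem_range.2 (Nat.succ_pos d))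
  simpa [p] using this

lemma aux_g_zero (d : ℕ) : g d 0 = 0 := by simp [g]

lemma aux_g_one (d : ℕ) : g d 1 = 1 := by
  simp [g, Finset.sum_range_succ']

lemma aux_g_mem (d : ℕ) (m : ℝ) (hm : m ∈ Set.Icc (0 : ℝ) 1) : g d m ∈ Set.Icc (0 : ℝ) 1 := by
  have hmono : MonotoneOn (g d) (Set.Icc 0 1) := by
    apply monotoneOn_of_hasDerivWithinAt_nonneg (convex_Icc 0 1)
      (fun x _ => (aux_deriv d x).continuousAt.continuousWithinAt)
      (fun x _ => (aux_deriv d x).hasDerivWithinAt)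
    intro x hx
    rw [interior_Icc] at hx
    have := aux_p_ge d
    have : 0 ≤ 1 - x ^ 2 := by nlinarith [hx.1, hx.2]
    positivity
  constructor
  · rw [← aux_g_zero d]
    exact hmono (by simp) hm hm.1
  · conv_rhs => rw [← aux_g_one d]
    exact hmono hm (by simp) hm.2

lemma aux_log (x t : ℝ) (hx : -1 < x) (h0 : 0 ≤ t) (h1 : t ≤ 1) :
    t * Real.log (1 + x) ≤ Real.log (1 + t * x) := by
  have h := strictConcaveOn_log_Ioi.concaveOn.2 (x := 1 + x) (y := 1)
    (by simp only [Set.mem_Ioi]; linarith) (by simp) h0 (sub_nonneg.2 h1) (by ring)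
  simp only [smul_eq_mul, Real.log_one, mul_zero, add_zero, mul_one] at h
  have e : t * (1 + x) + (1 - t) = 1 + t * x := by ring
  rwa [e] at h

lemma aux_phi (a b x y : ℝ) (ha : 0 ≤ a) (hb : 0 ≤ b) (hx : 0 ≤ x) (hxy : x ≤ y) (hy : y < 1)
    (h : 0 ≤ a * Real.log (1 + y) + b * Real.log (1 - y)) :
    0 ≤ a * Real.log (1 + x) + b * Real.log (1 - x) := by
  rcases (hx.trans hxy).eq_or_lt with h0 | h0
  · have : x = y := by linarith
    rwa [this]
  have ht0 : 0 ≤ x / y := by positivity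
  have ht1 : x / y ≤ 1 := (div_le_one h0).2 hxy
  have e : x / y * y = x := by field_simp
  have h1 := aux_log y (x / y) (by linarith) ht0 ht1
  have h2 := aux_log (-y) (x / y) (by linarith) ht0 ht1
  rw [mul_neg, e, ← sub_eq_add_neg, ← sub_eq_add_neg] at h2
  rw [e] at h1
  have h3 := mul_le_mul_of_nonneg_left h1 ha
  have h4 := mul_le_mul_of_nonneg_left h2 hb
  have h5 := mul_nonneg ht0 h
  nlinarith

lemma aux_step (d : ℕ) (m : ℝ) (hm : m ∈ Set.Icc (0 : ℝ) 1) :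
    1 - g d m ≤ (1 - m) ^ (p d) := by
  have hp1 := aux_p_ge d
  have hp2 := aux_p_le d
  rcases hm.2.eq_or_lt with h1 | hm1
  · rw [h1, aux_g_one]; simp [Real.zero_rpow (by linarith : p d ≠ 0)]
  let h : ℝ → ℝ := fun x => (1 - x) ^ (p d) + g d x
  let h' : ℝ → ℝ := fun x => p d * ((1 - x ^ 2) ^ d - (1 - x) ^ (p d - 1))
  have hcont : Continuous h := by
    have : Continuous (g d) := continuous_iff_continuousAt.2 fun x => (aux_deriv d x).continuousAt
    have h2 : Continuous fun x : ℝ => (1 - x) ^ (p d) :=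
      (continuous_const.sub continuous_id).rpow_const (fun x => Or.inr (by linarith))
    exact h2.add this
  have hder : ∀ x : ℝ, x < 1 → HasDerivAt h (h' x) x := by
    intro x hx
    have h3 := ((hasDerivAt_id' x).const_sub 1).rpow_const (p := p d)
      (Or.inl (by linarith : 1 - x ≠ 0))
    refine (h3.add (aux_deriv d x)).congr_deriv ?_
    simp only [h']
    ring
  have hexp : ∀ x : ℝ, 0 ≤ x → x < 1 →
      (1 - x ^ 2) ^ d = (1 - x) ^ (p d - 1) *
        Real.exp (d * Real.log (1 + x) + (d + 1 - p d) * Real.log (1 - x)) := by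
    intro x hx0 hx
    have e1 : (0 : ℝ) < 1 - x := by linarith
    have e2 : (0 : ℝ) < 1 + x := by linarith
    rw [Real.rpow_def_of_pos e1, ← Real.exp_add]
    have : (1 - x ^ 2) = Real.exp (Real.log (1 - x) + Real.log (1 + x)) := by
      rw [Real.exp_add, Real.exp_log e1, Real.exp_log e2]; ring
    rw [this, ← Real.exp_nat_mul]
    congr 1
    ring
  have h0 : h 0 = 1 := by simp [h, aux_g_zero]
  have h1 : h 1 = 1 := by simp [h, aux_g_one, Real.zero_rpow (by linarith : p d ≠ 0)]
  suffices 1 ≤ h m by simp only [h] at this; linarith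
  by_cases hs : 0 ≤ d * Real.log (1 + m) + (d + 1 - p d) * Real.log (1 - m)
  · have hmono : MonotoneOn h (Set.Icc 0 m) := by
      apply monotoneOn_of_hasDerivWithinAt_nonneg (f' := h') (convex_Icc 0 m) hcont.continuousOn
      · intro x hx
        rw [interior_Icc] at hx
        exact (hder x (hx.2.trans hm1)).hasDerivWithinAt
      · intro x hx
        rw [interior_Icc] at hx
        have hx1 := hx.2.trans hm1
        have hphi := aux_phi d (d + 1 - p d) x m (by positivity) (by linarith) hx.1.le hx.2.le hm1 hs
        have := Real.one_le_exp hphi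
        simp only [h']
        rw [hexp x hx.1.le hx1]
        apply mul_nonneg (by linarith)
        have : 0 ≤ (1 - x) ^ (p d - 1) := Real.rpow_nonneg (by linarith) _
        nlinarith
    rw [← h0]
    exact hmono ⟨le_rfl, hm.1⟩ ⟨hm.1, le_rfl⟩ hm.1
  · have hanti : AntitoneOn h (Set.Icc m 1) := by
      apply antitoneOn_of_hasDerivWithinAt_nonpos (f' := h') (convex_Icc m 1) hcont.continuousOn
      · intro x hx
        rw [interior_Icc] at hx
        exact (hder x hx.2).hasDerivWithinAt
      · intro x hx
        rw [interior_Icc] at hx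
        have hx0 : 0 ≤ x := hm.1.trans hx.1.le
        have hphi : d * Real.log (1 + x) + (d + 1 - p d) * Real.log (1 - x) ≤ 0 := by
          by_contra hc
          exact hs (aux_phi d (d + 1 - p d) m x (by positivity) (by linarith) hm.1 hx.1.le hx.2
            (not_le.1 hc).le)
        have := Real.exp_le_one_iff.2 hphi
        simp only [h']
        rw [hexp x hx0 hx.2]
        apply mul_nonpos_of_nonneg_of_nonpos (by linarith)
        have : 0 ≤ (1 - x) ^ (p d - 1) := Real.rpow_nonneg (by linarith [hx.2]) _
        nlinarith
    rw [← h1]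
    exact hanti ⟨le_rfl, hm.2⟩ ⟨hm.2, le_rfl⟩ hm.2

theorem stmt_6 (d : ℕ) (hd : 1 ≤ d) (k : ℕ) (m : ℝ) (hm : m ∈ Set.Icc (0 : ℝ) 1) :
    0 ≤ 1 - (g d)^[k] m ∧ 1 - (g d)^[k] m ≤ (1 - m) ^ (p d ^ k) := by
  have hmem : ∀ k : ℕ, (g d)^[k] m ∈ Set.Icc (0 : ℝ) 1 := by
    intro k
    induction k with
    | zero => simpa using hm
    | succ n ih => rw [Function.iterate_succ_apply']; exact aux_g_mem d _ ih
  refine ⟨sub_nonneg.2 (hmem k).2, ?_⟩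
  have hp1 := aux_p_ge d
  induction k with
  | zero => simp
  | succ n ih =>
    rw [Function.iterate_succ_apply', pow_succ, Real.rpow_mul (sub_nonneg.2 hm.2)]
    exact (aux_step d _ (hmem n)).trans
      (Real.rpow_le_rpow (sub_nonneg.2 (hmem n).2) ih (by linarith))
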